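/- (Pickands–Balkema–de Haan.) Let F be a cumulative distribution function on ℝ with right endpoint x_F = sup{x : F(x) < 1} ∈ (−∞, ∞], and suppose F lies in the maximum domain of attraction of a generalized extreme value distribution with index ξ ≠ 0: there exist reals a_n > 0 and b_n such that for every x with 1 + ξx > 0, F(a_n·x + b_n)^n → exp(−(1 + ξx)^{−1/ξ}) as n → ∞. For t < x_F define the conditional excess distribution function F_t(x) = (F(t + x) − F(t))/(1 − F(t)) for 0 ≤ x < x_F − t. Then there exists a positive function t ↦ σ(t) such that lim_{t → x_F} sup_{0 ≤ x < x_F − t} |F_t(x) − H_{ξ,σ(t)}(x)| = 0, where H_{ξ,σ}(x) = 1 − (1 + ξx/σ)^{−1/ξ}. -/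

import Mathlib

open Filter Topology

/-!
In terms of the tail `S = 1 - F`, attraction to a generalized extreme value law reads
`n * S (a n * u + b n) → (1 + ξ * u) ^ (-1 / ξ)`. Since `S` is monotone and the limit is continuous
and strictly monotone, `m * S x` is close to the limit tail at `u` exactly when `(x - b m) / a m` is
close to `u`. Choosing `m = ⌊1 / S t⌋` locates `t` at `u = 0`, so `S (t + σ * u) / S t` converges to
the generalized Pareto tail for any scale `σ` asymptotic to `a m`. Composed with the Pareto quantile
function, these ratios become monotone functions on the compact interval `[0, 1]` with a continuous
limit, and Pólya's argument makes the convergence uniform.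

For `ξ < 0` the scale must also keep `1 + ξ * x / σ` positive up to the right endpoint `r`, which
forces `σ t = -ξ * (r - t)` up to asymptotics. This is asymptotic to `a m` because
`(r - b n) / a n → -1 / ξ`: for `u > -1 / ξ`, the points `a n * u + b n` decrease along
`n, 2 * n, 4 * n, …`, while the tail there tends to zero, so they bound the endpoint from above.
-/

section Antitone

variable {ι α β : Type*} {L : Filter ι} [LinearOrder α] [TopologicalSpace α] [OrderTopology α]
  [LinearOrder β] {f : ι → α → β} {h : α → β} {x₀ : α}

theorem tendsto_uncurry_nhds_of_antitone [TopologicalSpace β] [OrderTopology β]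
    (hf : ∀ᶠ i in L, Antitone (f i)) (hh : ContinuousAt h x₀)
    (hlim : ∀ᶠ x in 𝓝 x₀, Tendsto (f · x) L (𝓝 (h x))) :
    Tendsto (fun q : ι × α => f q.1 q.2) (L ×ˢ 𝓝 x₀) (𝓝 (h x₀)) := by
  refine tendsto_order.2 ⟨fun c hc => ?_, fun c hc => ?_⟩
  · obtain ⟨l, r, hx₀, hnhds, hsub⟩ :=
      exists_Icc_mem_subset_of_mem_nhds (hlim.and (hh.eventually (lt_mem_nhds hc)))
    obtain ⟨hr, hcr⟩ := hsub (Set.right_mem_Icc.2 (hx₀.1.trans hx₀.2))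
    filter_upwards [(hf.and (hr.eventually (lt_mem_nhds hcr))).prod_mk hnhds] with q hq
    exact hq.1.2.trans_le (hq.1.1 hq.2.2)
  · obtain ⟨l, r, hx₀, hnhds, hsub⟩ :=
      exists_Icc_mem_subset_of_mem_nhds (hlim.and (hh.eventually (gt_mem_nhds hc)))
    obtain ⟨hl, hcl⟩ := hsub (Set.left_mem_Icc.2 (hx₀.1.trans hx₀.2))
    filter_upwards [(hf.and (hl.eventually (gt_mem_nhds hcl))).prod_mk hnhds] with q hq
    exact (hq.1.1 hq.2.1).trans_lt hq.1.2

theorem tendsto_nhds_of_antitone_of_strictAntiOn [DenselyOrdered α] [TopologicalSpace β]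
    [OrderClosedTopology β] {s : Set α} {x : ι → α} (hf : ∀ᶠ i in L, Antitone (f i))
    (hs : s ∈ 𝓝 x₀) (hh : StrictAntiOn h s) (hlim : ∀ u ∈ s, Tendsto (f · u) L (𝓝 (h u)))
    (hx : Tendsto (fun i => f i (x i)) L (𝓝 (h x₀))) : Tendsto x L (𝓝 x₀) := by
  have hx₀ := mem_of_mem_nhds hs
  refine tendsto_order.2 ⟨fun c hc => ?_, fun c hc => ?_⟩
  · have := nhdsLT_neBot_of_exists_lt ⟨c, hc⟩
    obtain ⟨u, hus, hcu, hux₀⟩ :=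
      nonempty_of_mem (inter_mem (mem_nhdsWithin_of_mem_nhds hs) (Ioo_mem_nhdsLT hc))
    filter_upwards [hx.eventually_lt (hlim u hus) (hh hus hx₀ hux₀), hf] with i hi hfi
    exact hcu.trans (hfi.reflect_lt hi)
  · have := nhdsGT_neBot_of_exists_gt ⟨c, hc⟩
    obtain ⟨u, hus, hux₀, huc⟩ :=
      nonempty_of_mem (inter_mem (mem_nhdsWithin_of_mem_nhds hs) (Ioo_mem_nhdsGT hc))
    filter_upwards [(hlim u hus).eventually_lt hx (hh hx₀ hus hux₀), hf] with i hi hfi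
    exact (hfi.reflect_lt hi).trans huc

/-- **Pólya's theorem** on a compact linear order. -/
theorem tendstoUniformly_of_antitone [CompactSpace α] [UniformSpace β] [OrderTopology β]
    (hf : ∀ᶠ i in L, Antitone (f i)) (hh : Continuous h)
    (hlim : ∀ x, Tendsto (f · x) L (𝓝 (h x))) : TendstoUniformly f h L := by
  rw [← tendstoLocallyUniformly_iff_tendstoUniformly_of_compactSpace,
    tendstoLocallyUniformly_iff_forall_tendsto]
  intro x
  have hjoint := tendsto_uncurry_nhds_of_antitone (x₀ := x) hf hh.continuousAt
    (.of_forall hlim)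
  exact (((hh.tendsto x).comp tendsto_snd).prodMk_nhds hjoint).mono_right (nhds_le_uniformity _)

end Antitone

theorem tendsto_natCast_mul_one_sub_of_tendsto_pow {p : ℕ → ℝ} {g : ℝ} (hp : ∀ n, 0 ≤ p n)
    (h : Tendsto (fun n => p n ^ n) atTop (𝓝 (Real.exp (-g)))) :
    Tendsto (fun n : ℕ => (n : ℝ) * (1 - p n)) atTop (𝓝 g) := by
  have hpos : ∀ᶠ n in atTop, 0 < p n := by
    filter_upwards [h.eventually (lt_mem_nhds (Real.exp_pos _)), eventually_ne_atTop 0]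
      with n hn hn₀
    exact (hp n).lt_of_ne fun h₀ => hn.ne' (by rw [← h₀, zero_pow hn₀])
  have hlog : Tendsto (fun n : ℕ => (n : ℝ) * Real.log (p n)) atTop (𝓝 (-g)) := by
    simpa only [Real.log_pow, Real.log_exp] using h.log (Real.exp_ne_zero _)
  have hlog₀ : Tendsto (fun n => Real.log (p n)) atTop (𝓝 0) := by
    refine (hlog.div_atTop tendsto_natCast_atTop_atTop).congr' ?_
    filter_upwards [eventually_ne_atTop 0] with n hn
    exact mul_div_cancel_left₀ _ (Nat.cast_ne_zero.2 hn)
  have hexp := (Real.hasDerivAt_exp 0).hasFDerivAt.hasFDerivWithinAt.lim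
    (s := Set.univ) hlog₀ (.of_forall fun _ => Set.mem_univ _) hlog
  have hexp' : Tendsto (fun n : ℕ => (n : ℝ) * (Real.exp (Real.log (p n)) - 1)) atTop (𝓝 (-g)) := by
    simpa using hexp
  refine neg_neg g ▸ hexp'.neg.congr' ?_
  filter_upwards [hpos] with n hn
  rw [Real.exp_log hn]
  ring

/-- The points `u` at which the generalized Pareto tail of shape `ξ` and scale `1` is given by its
power formula. Negative `u` are included: there the formula is the limit tail of the attraction
condition and exceeds `1`. -/
def gpdDomain (ξ : ℝ) : Set ℝ := {u | 0 < 1 + ξ * u}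

/-- The tail `1 - H_{ξ,1}` of the generalized Pareto distribution of shape `ξ ≠ 0`. Outside
`gpdDomain ξ` its values are those of `Real.rpow` at a nonpositive base and have no meaning. -/
noncomputable def gpdTail (ξ u : ℝ) : ℝ := (1 + ξ * u) ^ (-1 / ξ)

/-- The quantile function of the generalized Pareto distribution `H_{ξ,1}`, meaningful for levels
`p < 1`: at `p = 1` and `ξ > 0`, where the quantile is infinite, `0 ^ (-ξ)` is `0`. -/
noncomputable def gpdQuantile (ξ p : ℝ) : ℝ := ((1 - p) ^ (-ξ) - 1) / ξ

section GPD

variable {ξ u : ℝ}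

theorem isOpen_gpdDomain (ξ : ℝ) : IsOpen (gpdDomain ξ) :=
  isOpen_lt continuous_const (by fun_prop)

theorem zero_mem_gpdDomain (ξ : ℝ) : 0 ∈ gpdDomain ξ := by simp [gpdDomain]

theorem gpdTail_zero (ξ : ℝ) : gpdTail ξ 0 = 1 := by simp [gpdTail]

theorem gpdTail_pos (hu : u ∈ gpdDomain ξ) : 0 < gpdTail ξ u := Real.rpow_pos_of_pos hu _

theorem continuousAt_gpdTail (hu : u ∈ gpdDomain ξ) : ContinuousAt (gpdTail ξ) u :=
  ContinuousAt.rpow_const (by fun_prop) (.inl hu.ne')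

theorem strictAntiOn_gpdTail (hξ : ξ ≠ 0) : StrictAntiOn (gpdTail ξ) (gpdDomain ξ) := by
  intro u hu v hv huv
  rcases hξ.lt_or_gt with h | h
  · exact Real.rpow_lt_rpow hv.le (by linarith [mul_lt_mul_of_neg_left huv h])
      (div_pos_of_neg_of_neg neg_one_lt_zero h)
  · exact Real.rpow_lt_rpow_of_neg hu (by gcongr) (div_neg_of_neg_of_pos neg_one_lt_zero h)

theorem one_add_mul_gpdQuantile (hξ : ξ ≠ 0) (p : ℝ) :
    1 + ξ * gpdQuantile ξ p = (1 - p) ^ (-ξ) := by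
  rw [gpdQuantile, mul_div_cancel₀ _ hξ, add_sub_cancel]

theorem gpdQuantile_mem_gpdDomain (hξ : ξ ≠ 0) {p : ℝ} (hp : p < 1) :
    gpdQuantile ξ p ∈ gpdDomain ξ :=
  (Real.rpow_pos_of_pos (sub_pos.2 hp) _).trans_eq (one_add_mul_gpdQuantile hξ p).symm

theorem gpdTail_gpdQuantile (hξ : ξ ≠ 0) {p : ℝ} (hp : p < 1) :
    gpdTail ξ (gpdQuantile ξ p) = 1 - p := by
  rw [gpdTail, one_add_mul_gpdQuantile hξ, ← Real.rpow_mul (sub_pos.2 hp).le,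
    show -ξ * (-1 / ξ) = 1 by field_simp, Real.rpow_one]

theorem gpdQuantile_one_sub_gpdTail (hξ : ξ ≠ 0) (hu : u ∈ gpdDomain ξ) :
    gpdQuantile ξ (1 - gpdTail ξ u) = u := by
  rw [gpdQuantile, sub_sub_cancel, gpdTail, ← Real.rpow_mul (le_of_lt hu),
    show -1 / ξ * -ξ = 1 by field_simp, Real.rpow_one, add_sub_cancel_left,
    mul_div_cancel_left₀ _ hξ]

theorem monotoneOn_gpdQuantile (hξ : ξ ≠ 0) : MonotoneOn (gpdQuantile ξ) (Set.Iio 1) := by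
  intro p hp q hq hpq
  rwa [← (strictAntiOn_gpdTail hξ).le_iff_ge (gpdQuantile_mem_gpdDomain hξ hq)
    (gpdQuantile_mem_gpdDomain hξ hp), gpdTail_gpdQuantile hξ hp, gpdTail_gpdQuantile hξ hq,
    sub_le_sub_iff_left]

theorem one_add_mul_rescale (hξ : ξ ≠ 0) (r u : ℝ) :
    1 + ξ * (r ^ ξ * u + (r ^ ξ - 1) / ξ) = r ^ ξ * (1 + ξ * u) := by
  field_simp
  ring

theorem gpdTail_rescale (hξ : ξ ≠ 0) {r : ℝ} (hr : 0 < r) (hu : u ∈ gpdDomain ξ) :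
    gpdTail ξ (r ^ ξ * u + (r ^ ξ - 1) / ξ) = gpdTail ξ u / r := by
  rw [gpdTail, one_add_mul_rescale hξ, Real.mul_rpow (by positivity) (le_of_lt hu),
    ← Real.rpow_mul hr.le, mul_div_cancel₀ _ hξ, Real.rpow_neg_one, gpdTail, inv_mul_eq_div]

end GPD

theorem tendsto_sSup_of_tendstoUniformlyOn {ι α : Type*} {L : Filter ι} {f : ι → α → ℝ}
    {h : α → ℝ} {s : Set α} {V : ι → Set ℝ} (hf : TendstoUniformlyOn f h L s)
    (hV : ∀ᶠ i in L, ∀ v ∈ V i, ∃ u ∈ s, v = |h u - f i u|) :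
    Tendsto (fun i => sSup (V i)) L (𝓝 0) := by
  refine Metric.tendsto_nhds.2 fun ε hε => ?_
  filter_upwards [Metric.tendstoUniformlyOn_iff.1 hf (ε / 2) (half_pos hε), hV] with i hi hVi
  have hnonneg : 0 ≤ sSup (V i) := Real.sSup_nonneg fun v hv => by
    obtain ⟨u, -, rfl⟩ := hVi v hv
    exact abs_nonneg _
  have hle : sSup (V i) ≤ ε / 2 := Real.sSup_le (fun v hv => by
    obtain ⟨u, hu, rfl⟩ := hVi v hv
    exact (hi u hu).le) (half_pos hε).le
  rw [Real.dist_0_eq_abs, abs_of_nonneg hnonneg]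
  exact hle.trans_lt (half_lt_self hε)

/-- The sample size `n` for which a point of tail probability `s` is exceeded about once among `n`
observations. -/
noncomputable def levelIndex (s : ℝ) : ℕ := ⌊s⁻¹⌋₊

theorem tendsto_levelIndex : Tendsto levelIndex (𝓝[>] 0) atTop :=
  tendsto_nat_floor_atTop.comp tendsto_inv_nhdsGT_zero

theorem tendsto_levelIndex_mul_self :
    Tendsto (fun s : ℝ => (levelIndex s : ℝ) * s) (𝓝[>] 0) (𝓝 1) :=
  (tendsto_nat_floor_div_atTop.comp tendsto_inv_nhdsGT_zero).congr fun s => by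
    rw [Function.comp_apply, div_inv_eq_mul, levelIndex]

/-- `S` is the tail of a distribution in the maximum domain of attraction of the generalized extreme
value distribution of index `ξ`, with scales `a n` and locations `b n`. The condition on the powers
`F (a n * u + b n) ^ n` is replaced by its logarithm, the expected number of exceedances of
`a n * u + b n` among `n` observations. -/
structure IsGPDAttracted (S : ℝ → ℝ) (ξ : ℝ) (a b : ℕ → ℝ) : Prop where
  antitone : Antitone S
  nonneg : ∀ x, 0 ≤ S x
  scale_pos : ∀ n, 0 < a n
  tendsto : ∀ u ∈ gpdDomain ξ,
    Tendsto (fun n : ℕ => (n : ℝ) * S (a n * u + b n)) atTop (𝓝 (gpdTail ξ u))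

/-- `σ` is an admissible scale for the excesses of the tail `S` over thresholds tending to the right
endpoint `e`: it is asymptotic to the scale `a n` at the sample size matching the threshold, and it
keeps every excess below the endpoint in the domain of the generalized Pareto tail. -/
structure IsExcessScale (S : ℝ → ℝ) (ξ : ℝ) (a : ℕ → ℝ) (e : EReal) (σ : ℝ → ℝ) : Prop where
  pos : ∀ t : ℝ, (t : EReal) < e → 0 < σ t
  tendsto : Tendsto (fun t => σ t / a (levelIndex (S t))) (comap Real.toEReal (𝓝[<] e)) (𝓝 1)
  mem_gpdDomain : ∀ t x : ℝ, 0 ≤ x → ((t + x : ℝ) : EReal) < e → x / σ t ∈ gpdDomain ξ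

namespace IsGPDAttracted

section Location

variable {S : ℝ → ℝ} {ξ u : ℝ} {a b : ℕ → ℝ} {ι : Type*} {L : Filter ι} {m : ι → ℕ} {x : ι → ℝ}

theorem antitone_standardized (hS : IsGPDAttracted S ξ a b) (n : ℕ) :
    Antitone fun u => (n : ℝ) * S (a n * u + b n) := fun u v huv => by
  have := hS.scale_pos n
  have := hS.antitone (show a n * u + b n ≤ a n * v + b n by gcongr)
  dsimp only
  gcongr

theorem tail_scale_mul_location_add (hS : IsGPDAttracted S ξ a b) (n : ℕ) (t : ℝ) :
    S (a n * ((t - b n) / a n) + b n) = S t := by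
  rw [mul_div_cancel₀ _ (hS.scale_pos n).ne', sub_add_cancel]

theorem tendsto_mul_tail (hS : IsGPDAttracted S ξ a b) (hm : Tendsto m L atTop)
    (hu : u ∈ gpdDomain ξ) (hx : Tendsto (fun i => (x i - b (m i)) / a (m i)) L (𝓝 u)) :
    Tendsto (fun i => (m i : ℝ) * S (x i)) L (𝓝 (gpdTail ξ u)) := by
  have hjoint := tendsto_uncurry_nhds_of_antitone (L := L)
    (f := fun i u => (m i : ℝ) * S (a (m i) * u + b (m i)))
    (.of_forall fun i => hS.antitone_standardized (m i)) (continuousAt_gpdTail hu)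
    (((isOpen_gpdDomain ξ).eventually_mem hu).mono fun v hv => (hS.tendsto v hv).comp hm)
  simpa only [Function.comp_def, id_eq, hS.tail_scale_mul_location_add] using
    hjoint.comp (tendsto_id.prodMk hx)

theorem tendsto_location (hS : IsGPDAttracted S ξ a b) (hξ : ξ ≠ 0) (hm : Tendsto m L atTop)
    (hu : u ∈ gpdDomain ξ) (hx : Tendsto (fun i => (m i : ℝ) * S (x i)) L (𝓝 (gpdTail ξ u))) :
    Tendsto (fun i => (x i - b (m i)) / a (m i)) L (𝓝 u) := by
  refine tendsto_nhds_of_antitone_of_strictAntiOn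
    (f := fun i u => (m i : ℝ) * S (a (m i) * u + b (m i)))
    (.of_forall fun i => hS.antitone_standardized (m i)) ((isOpen_gpdDomain ξ).mem_nhds hu)
    (strictAntiOn_gpdTail hξ) (fun v hv => (hS.tendsto v hv).comp hm) ?_
  simpa only [hS.tail_scale_mul_location_add] using hx

end Location

section Endpoint

variable {S : ℝ → ℝ} {ξ u r : ℝ} {a b : ℕ → ℝ} {e : EReal}

theorem tendsto_rescaled_location_of_mem (hS : IsGPDAttracted S ξ a b) (hξ : ξ ≠ 0) {k : ℕ}
    (hk : 0 < k) (hu : u ∈ gpdDomain ξ) :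
    Tendsto (fun n => (a (k * n) * u + b (k * n) - b n) / a n) atTop
      (𝓝 (k ^ ξ * u + (k ^ ξ - 1) / ξ)) := by
  have hk' : (0 : ℝ) < k := Nat.cast_pos.2 hk
  have hmem : k ^ ξ * u + (k ^ ξ - 1) / ξ ∈ gpdDomain ξ :=
    (mul_pos (Real.rpow_pos_of_pos hk' ξ) hu).trans_eq (one_add_mul_rescale hξ k u).symm
  refine hS.tendsto_location hξ tendsto_id hmem ?_
  rw [gpdTail_rescale hξ hk' hu]
  refine (((hS.tendsto u hu).comp (tendsto_id.const_mul_atTop' hk)).div_const (k : ℝ)).congr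
    fun n => ?_
  simp only [Function.comp_apply, id_eq, Nat.cast_mul]
  rw [mul_assoc, mul_div_cancel_left₀ _ hk'.ne']

theorem tendsto_rescaled_location (hS : IsGPDAttracted S ξ a b) (hξ : ξ ≠ 0) {k : ℕ}
    (hk : 0 < k) (u : ℝ) :
    Tendsto (fun n => (a (k * n) * u + b (k * n) - b n) / a n) atTop
      (𝓝 (k ^ ξ * u + (k ^ ξ - 1) / ξ)) := by
  have hv : -1 / (2 * ξ) ∈ gpdDomain ξ := by
    have : 1 + ξ * (-1 / (2 * ξ)) = 1 / 2 := by field_simp; norm_num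
    exact one_half_pos.trans_eq this.symm
  have h₀ := hS.tendsto_rescaled_location_of_mem hξ hk (zero_mem_gpdDomain ξ)
  have h₁ := hS.tendsto_rescaled_location_of_mem hξ hk hv
  convert h₀.add ((h₁.sub h₀).const_mul (-2 * ξ * u)) using 2 <;> field_simp <;> ring

theorem tendsto_tail_location (hS : IsGPDAttracted S ξ a b) :
    Tendsto (fun n => S (b n)) atTop (𝓝 0) := by
  refine ((hS.tendsto 0 (zero_mem_gpdDomain ξ)).div_atTop tendsto_natCast_atTop_atTop).congr' ?_
  filter_upwards [eventually_ne_atTop 0] with n hn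
  rw [mul_zero, zero_add, mul_div_cancel_left₀ _ (Nat.cast_ne_zero.2 hn)]

theorem eventually_location_two_mul_lt (hS : IsGPDAttracted S ξ a b) (hξ : ξ < 0)
    (hu : -1 / ξ < u) :
    ∀ᶠ n in atTop, a (2 * n) * u + b (2 * n) < a n * u + b n := by
  have hlt : (2 : ℕ) ^ ξ * u + ((2 : ℕ) ^ ξ - 1) / ξ < u := by
    have hpow : ((2 : ℕ) : ℝ) ^ ξ < 1 := Real.rpow_lt_one_of_one_lt_of_neg (by norm_num) hξ
    calc (2 : ℕ) ^ ξ * u + ((2 : ℕ) ^ ξ - 1) / ξ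
        = u - (1 - (2 : ℕ) ^ ξ) * (u - -1 / ξ) := by ring
      _ < u := sub_lt_self _ (mul_pos (sub_pos.2 hpow) (sub_pos.2 hu))
  filter_upwards [(hS.tendsto_rescaled_location hξ.ne two_pos u).eventually (gt_mem_nhds hlt)]
    with n hn
  rw [div_lt_iff₀ (hS.scale_pos n)] at hn
  linarith

theorem eventually_mem_upperBounds (hS : IsGPDAttracted S ξ a b) (hξ : ξ < 0)
    (hu : -1 / ξ < u) :
    ∀ᶠ n in atTop, a n * u + b n ∈ upperBounds {t | 0 < S t} := by
  obtain ⟨N, hN⟩ := eventually_atTop.1 (hS.eventually_location_two_mul_lt hξ hu)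
  filter_upwards [eventually_ge_atTop N, eventually_gt_atTop 0] with n hn hn₀ t ht
  have hanti : Antitone fun j : ℕ => a (2 ^ j * n) * u + b (2 ^ j * n) :=
    antitone_nat_of_succ_le fun j => by
      rw [pow_succ', mul_assoc]
      exact (hN _ (hn.trans (Nat.le_mul_of_pos_left n (by positivity)))).le
  have hindex : Tendsto (fun j : ℕ => 2 ^ j * n) atTop atTop :=
    (tendsto_pow_atTop_atTop_of_one_lt one_lt_two).atTop_mul_const' hn₀
  obtain ⟨j, hj⟩ := ((hS.tendsto_tail_location.comp hindex).eventually (gt_mem_nhds ht)).exists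
  have hu₀ : 0 < u := (div_pos_of_neg_of_neg neg_one_lt_zero hξ).trans hu
  calc t ≤ b (2 ^ j * n) := (hS.antitone.reflect_lt hj).le
    _ ≤ a (2 ^ j * n) * u + b (2 ^ j * n) :=
      le_add_of_nonneg_left (mul_pos (hS.scale_pos _) hu₀).le
    _ ≤ a (2 ^ 0 * n) * u + b (2 ^ 0 * n) := hanti j.zero_le
    _ = a n * u + b n := by rw [pow_zero, one_mul]

theorem eventually_exists_gt_tail_pos (hS : IsGPDAttracted S ξ a b) (hu : u ∈ gpdDomain ξ) :
    ∀ᶠ n in atTop, ∃ t, a n * u + b n < t ∧ 0 < S t := by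
  obtain ⟨v, hv, huv⟩ := (((isOpen_gpdDomain ξ).eventually_mem hu).filter_mono
    nhdsWithin_le_nhds |>.and (self_mem_nhdsWithin : Set.Ioi u ∈ 𝓝[>] u)).exists
  filter_upwards [(hS.tendsto v hv).eventually (lt_mem_nhds (gpdTail_pos hv))] with n hn
  have hlt : a n * u < a n * v := mul_lt_mul_of_pos_left huv (hS.scale_pos n)
  exact ⟨a n * v + b n, add_lt_add_left hlt _, pos_of_mul_pos_right hn n.cast_nonneg⟩

theorem exists_coe_eq_endpoint (hS : IsGPDAttracted S ξ a b) (hξ : ξ < 0)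
    (he : IsLUB (Real.toEReal '' {t | 0 < S t}) e) : ∃ r : ℝ, (r : EReal) = e := by
  obtain ⟨n, hn⟩ := (hS.eventually_mem_upperBounds hξ (lt_add_one _)).exists
  obtain ⟨_, t, -, ht⟩ := (hS.eventually_exists_gt_tail_pos (zero_mem_gpdDomain ξ)).exists
  have hbot : e ≠ ⊥ := ((EReal.bot_lt_coe t).trans_le (he.1 ⟨t, ht, rfl⟩)).ne'
  have htop : e ≠ ⊤ := by
    refine ((he.2 ?_).trans_lt (EReal.coe_lt_top (a n * (-1 / ξ + 1) + b n))).ne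
    rintro _ ⟨s, hs, rfl⟩
    exact EReal.coe_le_coe_iff.2 (hn hs)
  exact ⟨e.toReal, EReal.coe_toReal htop hbot⟩

theorem tendsto_location_endpoint (hS : IsGPDAttracted S ξ a b) (hξ : ξ < 0)
    (hr : IsLUB {t | 0 < S t} r) :
    Tendsto (fun n => (r - b n) / a n) atTop (𝓝 (-1 / ξ)) := by
  refine tendsto_order.2 ⟨fun u hu => ?_, fun u hu => ?_⟩
  · have hmem : u ∈ gpdDomain ξ := by
      have := mul_lt_mul_of_neg_left hu hξ
      rw [mul_div_cancel₀ _ hξ.ne] at this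
      exact neg_lt_iff_pos_add'.1 this
    filter_upwards [hS.eventually_exists_gt_tail_pos hmem] with n ⟨t, hlt, ht⟩
    rw [lt_div_iff₀ (hS.scale_pos n)]
    linarith [hr.1 ht]
  · obtain ⟨v, hv, hvu⟩ := exists_between hu
    filter_upwards [hS.eventually_mem_upperBounds hξ hv] with n hn
    have hle : (r - b n) / a n ≤ v := by
      rw [div_le_iff₀ (hS.scale_pos n)]
      linarith [hr.2 hn]
    exact hle.trans_lt hvu

theorem tail_pos_of_lt_endpoint (hS : IsGPDAttracted S ξ a b)
    (he : IsLUB (Real.toEReal '' {t | 0 < S t}) e) {t : ℝ} (ht : (t : EReal) < e) : 0 < S t := by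
  obtain ⟨_, ⟨s, hs, rfl⟩, hts⟩ := (lt_isLUB_iff he).1 ht
  exact hs.trans_le (hS.antitone (EReal.coe_lt_coe_iff.1 hts).le)

theorem tendsto_tail_endpoint (hS : IsGPDAttracted S ξ a b)
    (he : IsLUB (Real.toEReal '' {t | 0 < S t}) e) :
    Tendsto S (comap Real.toEReal (𝓝[<] e)) (𝓝[>] 0) := by
  have hlt : ∀ᶠ t : ℝ in comap Real.toEReal (𝓝[<] e), (t : EReal) < e :=
    tendsto_comap.eventually self_mem_nhdsWithin
  refine tendsto_nhdsWithin_iff.2 ⟨tendsto_order.2 ⟨fun c hc => ?_, fun c hc => ?_⟩, ?_⟩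
  · exact .of_forall fun t => hc.trans_le (hS.nonneg t)
  · obtain ⟨n, hn, s, hs, hs₀⟩ := ((hS.tendsto_tail_location.eventually (gt_mem_nhds hc)).and
      (hS.eventually_exists_gt_tail_pos (zero_mem_gpdDomain ξ))).exists
    rw [mul_zero, zero_add] at hs
    have hbe : (b n : EReal) < e := (EReal.coe_lt_coe_iff.2 hs).trans_le (he.1 ⟨s, hs₀, rfl⟩)
    filter_upwards [tendsto_comap.eventually (mem_nhdsWithin_of_mem_nhds (lt_mem_nhds hbe))]
      with t ht
    exact (hS.antitone (EReal.coe_lt_coe_iff.1 ht).le).trans_lt hn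
  · exact hlt.mono fun t ht => hS.tail_pos_of_lt_endpoint he ht

end Endpoint

section Excess

variable {S σ : ℝ → ℝ} {ξ u : ℝ} {a b : ℕ → ℝ} {e : EReal} {L : Filter ℝ}

theorem tendsto_location_levelIndex (hS : IsGPDAttracted S ξ a b) (hξ : ξ ≠ 0)
    (hL : Tendsto S L (𝓝[>] 0)) :
    Tendsto (fun t => (t - b (levelIndex (S t))) / a (levelIndex (S t))) L (𝓝 0) :=
  hS.tendsto_location hξ (tendsto_levelIndex.comp hL) (zero_mem_gpdDomain ξ)
    (gpdTail_zero ξ ▸ tendsto_levelIndex_mul_self.comp hL)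

theorem tendsto_excess (hS : IsGPDAttracted S ξ a b) (hξ : ξ ≠ 0) (hL : Tendsto S L (𝓝[>] 0))
    (hσ : Tendsto (fun t => σ t / a (levelIndex (S t))) L (𝓝 1)) (hu : u ∈ gpdDomain ξ) :
    Tendsto (fun t => S (t + σ t * u) / S t) L (𝓝 (gpdTail ξ u)) := by
  have hloc : Tendsto (fun t => (t + σ t * u - b (levelIndex (S t))) / a (levelIndex (S t)))
      L (𝓝 u) := by
    simpa only [zero_add, one_mul, add_sub_right_comm, add_div, div_mul_eq_mul_div] using
      (hS.tendsto_location_levelIndex hξ hL).add (hσ.mul_const u)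
  have hm : Tendsto (fun t => levelIndex (S t)) L atTop := tendsto_levelIndex.comp hL
  have hratio := (hS.tendsto_mul_tail hm hu hloc).div (tendsto_levelIndex_mul_self.comp hL)
    one_ne_zero
  rw [div_one] at hratio
  refine hratio.congr' ?_
  filter_upwards [hm.eventually_ne_atTop 0] with t ht
  exact mul_div_mul_left _ _ (Nat.cast_ne_zero.2 ht)

theorem antitone_excess_gpdQuantile (hS : IsGPDAttracted S ξ a b) (hξ : ξ ≠ 0) {s : ℝ}
    (hs : 0 ≤ s) (t : ℝ) :
    Antitone fun p : ℝ => if p < 1 then S (t + s * gpdQuantile ξ p) / S t else 0 := by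
  intro p q hpq
  dsimp only
  have hSt := hS.nonneg t
  split_ifs with hq hp hp
  · have := hS.antitone (show t + s * gpdQuantile ξ p ≤ t + s * gpdQuantile ξ q by
      gcongr; exact monotoneOn_gpdQuantile hξ hp hq hpq)
    gcongr
  · exact absurd (hpq.trans_lt hq) hp
  · exact div_nonneg (hS.nonneg _) hSt
  · exact le_rfl

theorem tendstoUniformlyOn_excess (hS : IsGPDAttracted S ξ a b) (hξ : ξ ≠ 0)
    (hL : Tendsto S L (𝓝[>] 0))
    (hσ : Tendsto (fun t => σ t / a (levelIndex (S t))) L (𝓝 1)) :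
    TendstoUniformlyOn (fun t u => S (t + σ t * u) / S t) (gpdTail ξ) L
      (gpdDomain ξ ∩ Set.Ici 0) := by
  have hσ_nonneg : ∀ᶠ t in L, 0 ≤ σ t := by
    filter_upwards [hσ.eventually (lt_mem_nhds one_pos)] with t ht
    exact ((div_pos_iff_of_pos_right (hS.scale_pos _)).1 ht).le
  have hquantile : TendstoUniformly
      (fun t (p : Set.Icc (0 : ℝ) 1) =>
        if (p : ℝ) < 1 then S (t + σ t * gpdQuantile ξ p) / S t else 0)
      (fun p => 1 - (p : ℝ)) L := by
    refine tendstoUniformly_of_antitone ?_ (by fun_prop) fun p => ?_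
    · filter_upwards [hσ_nonneg] with t ht
      exact (hS.antitone_excess_gpdQuantile hξ ht t).comp_monotone (Subtype.mono_coe _)
    · rcases p.2.2.lt_or_eq with hp | hp
      · simpa only [hp, if_true, gpdTail_gpdQuantile hξ hp] using
          hS.tendsto_excess hξ hL hσ (gpdQuantile_mem_gpdDomain hξ hp)
      · simp only [hp, lt_irrefl, if_false, sub_self, tendsto_const_nhds]
  refine Metric.tendstoUniformlyOn_iff.2 fun ε hε => ?_
  filter_upwards [Metric.tendstoUniformly_iff.1 hquantile ε hε] with t ht u ⟨hu, hu₀⟩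
  have hpos := gpdTail_pos hu
  have hle : gpdTail ξ u ≤ 1 := gpdTail_zero ξ ▸
    (strictAntiOn_gpdTail hξ).antitoneOn (zero_mem_gpdDomain ξ) hu hu₀
  have hp := ht ⟨1 - gpdTail ξ u, sub_nonneg.2 hle, sub_le_self _ hpos.le⟩
  rwa [if_pos (sub_lt_self _ hpos), gpdQuantile_one_sub_gpdTail hξ hu, sub_sub_cancel] at hp

theorem isExcessScale_of_neg (hS : IsGPDAttracted S ξ a b) (hξ : ξ < 0) {r : ℝ}
    (hr : IsLUB (Real.toEReal '' {t | 0 < S t}) r) :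
    IsExcessScale S ξ a r fun t => -ξ * (r - t) where
  pos t ht := mul_pos (neg_pos.2 hξ) (sub_pos.2 (EReal.coe_lt_coe_iff.1 ht))
  tendsto := by
    have hL := hS.tendsto_tail_endpoint hr
    have hend := (hS.tendsto_location_endpoint hξ
      (IsLUB.of_image EReal.coe_le_coe_iff hr)).comp (tendsto_levelIndex.comp hL)
    convert (hend.sub (hS.tendsto_location_levelIndex hξ.ne hL)).const_mul (-ξ) using 2
    · simp only [Function.comp_apply]
      ring
    · rw [sub_zero, neg_mul, mul_div_cancel₀ _ hξ.ne, neg_neg]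
  mem_gpdDomain t x hx htx := by
    have htx : t + x < r := EReal.coe_lt_coe_iff.1 htx
    have hrt : 0 < r - t := by linarith
    have hbase : 1 + ξ * (x / (-ξ * (r - t))) = (r - t - x) / (r - t) := by
      have := hξ.ne
      field_simp
      ring
    exact (div_pos (by linarith) hrt).trans_eq hbase.symm

theorem isExcessScale_of_pos (hS : IsGPDAttracted S ξ a b) (hξ : 0 < ξ) :
    IsExcessScale S ξ a e fun t => a (levelIndex (S t)) where
  pos t _ := hS.scale_pos _
  tendsto := by simp only [div_self (hS.scale_pos _).ne', tendsto_const_nhds]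
  mem_gpdDomain t x hx _ := by
    have := hS.scale_pos (levelIndex (S t))
    change 0 < 1 + ξ * (x / a (levelIndex (S t)))
    positivity

theorem exists_isExcessScale (hS : IsGPDAttracted S ξ a b) (hξ : ξ ≠ 0)
    (he : IsLUB (Real.toEReal '' {t | 0 < S t}) e) : ∃ σ, IsExcessScale S ξ a e σ := by
  rcases hξ.lt_or_gt with hneg | hpos
  · obtain ⟨r, rfl⟩ := hS.exists_coe_eq_endpoint hneg he
    exact ⟨_, hS.isExcessScale_of_neg hneg he⟩
  · exact ⟨_, hS.isExcessScale_of_pos hpos⟩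

end Excess

end IsGPDAttracted

theorem isGPDAttracted_one_sub {F : ℝ → ℝ} {ξ : ℝ} {a b : ℕ → ℝ} (hF : Monotone F)
    (hF₀ : Tendsto F atBot (𝓝 0)) (hF₁ : Tendsto F atTop (𝓝 1)) (ha : ∀ n, 0 < a n)
    (h : ∀ u ∈ gpdDomain ξ, Tendsto (fun n : ℕ => F (a n * u + b n) ^ n) atTop
      (𝓝 (Real.exp (-gpdTail ξ u)))) :
    IsGPDAttracted (fun x => 1 - F x) ξ a b where
  antitone _ _ hxy := sub_le_sub_left (hF hxy) 1
  nonneg x := sub_nonneg.2 (hF.ge_of_tendsto hF₁ x)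
  scale_pos := ha
  tendsto u hu :=
    tendsto_natCast_mul_one_sub_of_tendsto_pow (fun _ => hF.le_of_tendsto hF₀ _) (h u hu)

theorem isLUB_endpoint (F : ℝ → ℝ) :
    IsLUB (Real.toEReal '' {x | 0 < 1 - F x})
      (sSup {y : EReal | ∃ x : ℝ, y = (x : EReal) ∧ F x < 1}) := by
  have himage : Real.toEReal '' {x | 0 < 1 - F x} =
      {y : EReal | ∃ x : ℝ, y = (x : EReal) ∧ F x < 1} := by
    refine Set.ext fun y => ?_
    simp only [Set.mem_image, Set.mem_ofPred_eq, sub_pos, eq_comm, and_comm]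
  exact himage ▸ isLUB_sSup _

theorem excess_sub_gpd_eq {F : ℝ → ℝ} {ξ s t : ℝ} (x : ℝ) (hs : s ≠ 0) (ht : 1 - F t ≠ 0) :
    (F (t + x) - F t) / (1 - F t) - (1 - (1 + ξ * x / s) ^ (-1 / ξ)) =
      gpdTail ξ (x / s) - (1 - F (t + s * (x / s))) / (1 - F t) := by
  rw [gpdTail, mul_div_cancel₀ _ hs, mul_div_assoc]
  field_simp
  ring

/-- **Pickands–Balkema–de Haan.** Let `F` be a CDF on `ℝ` with right endpoint
`x_F = sup {x : F(x) < 1} ∈ (−∞, ∞]`, lying in the maximum domain of attraction of a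
generalized extreme value distribution with index `ξ ≠ 0`: there are `a_n > 0`, `b_n`
with `F(a_n x + b_n)^n → exp(−(1 + ξx)^(−1/ξ))` for all `x` with `1 + ξx > 0`. Then
there is a positive scale function `σ(t)` such that the conditional excess CDF
`F_t(x) = (F(t + x) − F(t))/(1 − F(t))` satisfies
`sup_{0 ≤ x < x_F − t} |F_t(x) − H_{ξ,σ(t)}(x)| → 0` as `t → x_F`, where
`H_{ξ,σ}(x) = 1 − (1 + ξx/σ)^(−1/ξ)`. -/
theorem pickands_balkema_deHaan (F : ℝ → ℝ) (ξ : ℝ) (hξ : ξ ≠ 0)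
    (hFmono : Monotone F)
    (hF0 : Tendsto F atBot (𝓝 0)) (hF1 : Tendsto F atTop (𝓝 1))
    (xF : EReal) (hxF : xF = sSup {y : EReal | ∃ x : ℝ, y = (x : EReal) ∧ F x < 1})
    (a b : ℕ → ℝ) (ha : ∀ n, 0 < a n)
    (hMDA : ∀ x : ℝ, 1 + ξ * x > 0 →
      Tendsto (fun n : ℕ => F (a n * x + b n) ^ n) atTop
        (𝓝 (Real.exp (-(1 + ξ * x) ^ (-1 / ξ))))) :
    ∃ σ : ℝ → ℝ, (∀ t : ℝ, (t : EReal) < xF → 0 < σ t) ∧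
      Tendsto (fun t : ℝ =>
          sSup {v : ℝ | ∃ x : ℝ, 0 ≤ x ∧ ((t + x : ℝ) : EReal) < xF ∧
            v = |(F (t + x) - F t) / (1 - F t) -
                  (1 - (1 + ξ * x / σ t) ^ (-1 / ξ))|})
        (Filter.comap (fun t : ℝ => (t : EReal)) (𝓝[<] xF)) (𝓝 0) := by
  have hS := isGPDAttracted_one_sub hFmono hF0 hF1 ha hMDA
  have he : IsLUB (Real.toEReal '' {x | 0 < 1 - F x}) xF := hxF ▸ isLUB_endpoint F
  obtain ⟨σ, hσ⟩ := hS.exists_isExcessScale hξ he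
  refine ⟨σ, hσ.pos, tendsto_sSup_of_tendstoUniformlyOn
    (hS.tendstoUniformlyOn_excess hξ (hS.tendsto_tail_endpoint he) hσ.tendsto) ?_⟩
  filter_upwards [tendsto_comap.eventually self_mem_nhdsWithin] with t ht
  rintro _ ⟨x, hx, htx, rfl⟩
  exact ⟨x / σ t, ⟨hσ.mem_gpdDomain t x hx htx, div_nonneg hx (hσ.pos t ht).le⟩,
    congrArg abs (excess_sub_gpd_eq x (hσ.pos t ht).ne' (hS.tail_pos_of_lt_endpoint he ht).ne')⟩
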